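/- arXiv:2410.20500 — 4 statements merged into one kernel-verified Lean document; each statement's English description precedes it below -/
import Mathlib

section
/- Let R be a Noetherian ring, π ∈ R, A a finitely generated R[1/π]-algebra, B a π-adically complete R̂-algebra with π-torsionfree B, C = B[1/π], and j*: A → C an R[1/π]-algebra map. Suppose x₁,…,xₙ ∈ D := A ×_C B are chosen so that their images generate A over R[1/π], their images topologically generate B over R̂, the kernel K of R̂[1/π]⟨x⟩ → C equals I·R̂[1/π]⟨x⟩ where I is the kernel of R[1/π][x] → A, and the kernel J of R̂⟨x⟩ → B equals K ∩ R̂⟨x⟩. Then D is generated as an R-algebra by x₁,…,xₙ. -/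
theorem adic_approx {P : Type*} [CommRing P] (t : P)
    (s : AdicCompletion (Ideal.span {t}) P) (N : ℕ) :
    ∃ (p : P) (q : AdicCompletion (Ideal.span {t}) P),
      s = algebraMap P _ p + (algebraMap P _ t) ^ N * q := by
  obtain ⟨p, hp⟩ := Submodule.Quotient.mk_surjective _ (AdicCompletion.eval (Ideal.span {t}) P N s)
  refine ⟨p, ?_⟩
  have hk : s - algebraMap P _ p ∈ (AdicCompletion.eval (Ideal.span {t}) P N).ker := by
    rw [LinearMap.mem_ker, map_sub, ← hp, sub_eq_zero]
    rfl
  have hfg : (Ideal.span {t}).FG := ⟨{t}, by simp⟩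
  rw [← AdicCompletion.pow_smul_top_eq_ker_eval hfg, Ideal.span_singleton_pow,
    Submodule.ideal_span_singleton_smul, Submodule.mem_smul_pointwise_iff_exists] at hk
  obtain ⟨q, -, hq⟩ := hk
  refine ⟨q, ?_⟩
  rw [Algebra.smul_def, map_pow] at hq
  rw [hq]
  ring

theorem adic_div {P : Type*} [CommRing P] (t p : P) (N : ℕ)
    (q : AdicCompletion (Ideal.span {t}) P)
    (h : algebraMap P _ p = (algebraMap P (AdicCompletion (Ideal.span {t}) P) t) ^ N * q) :
    ∃ p', p = t ^ N * p' := by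
  have h1 := congrArg (AdicCompletion.evalₐ (Ideal.span {t}) N) h
  rw [map_mul, map_pow] at h1
  have e : ∀ z : P, AdicCompletion.evalₐ (Ideal.span {t}) N (algebraMap P _ z)
      = Ideal.Quotient.mk _ z := fun z => AdicCompletion.evalₐ_of _ _ _
  rw [e, e, ← map_pow] at h1
  have : Ideal.Quotient.mk (Ideal.span {t} ^ N) (t ^ N) = 0 := by
    rw [Ideal.Quotient.eq_zero_iff_mem]
    exact Ideal.pow_mem_pow (Ideal.mem_span_singleton_self t) N
  rw [this, zero_mul, Ideal.Quotient.eq_zero_iff_mem, Ideal.span_singleton_pow,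
    Ideal.mem_span_singleton] at h1
  exact h1

theorem core_approx {P S Pl Sl A : Type*} [CommRing P] [CommRing S] [CommRing Pl] [CommRing Sl]
    [CommRing A] (t : P) (ι : P →+* S) (l : S →+* Sl) (μ : P →+* Pl) (g : Pl →+* Sl)
    (e : Pl →+* A)
    (hl : ∀ y, ∃ (m : ℕ) (s : S), l (ι t) ^ m * y = l s)
    (hμ : ∀ f, ∃ (m : ℕ) (F : P), μ t ^ m * f = μ F)
    (happ : ∀ (s : S) (N : ℕ), ∃ p q, s = ι p + ι t ^ N * q)
    (hg : ∀ p, g (μ p) = l (ι p))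
    (y : Sl) (hy : y ∈ Ideal.map g (RingHom.ker e)) :
    ∀ N : ℕ, ∃ (m : ℕ) (i : P) (s : S), e (μ i) = 0 ∧
      l (ι t) ^ m * y = l (ι i) + l (ι t) ^ (m + N) * l s := by
  induction hy using Submodule.span_induction with
  | mem y hy =>
    obtain ⟨f, hf, rfl⟩ := hy
    intro N
    obtain ⟨m, F, hF⟩ := hμ f
    refine ⟨m, F, 0, ?_, ?_⟩
    · rw [← hF, map_mul, (RingHom.mem_ker).1 hf, mul_zero]
    · rw [← hg, ← hg, ← hF]; simp
  | zero => intro N; exact ⟨0, 0, 0, by simp, by simp⟩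
  | add y z _ _ ihy ihz =>
    intro N
    obtain ⟨m, i, s, hi, h⟩ := ihy N
    obtain ⟨m', i', s', hi', h'⟩ := ihz N
    refine ⟨m + m', t ^ m' * i + t ^ m * i', s + s', by simp [hi, hi'], ?_⟩
    simp only [map_add, map_mul, map_pow]
    linear_combination l (ι t) ^ m' * h + l (ι t) ^ m * h'
  | smul c y _ ih =>
    intro N
    obtain ⟨k, c', hc⟩ := hl c
    obtain ⟨m, i, s, hi, h⟩ := ih (N + k)
    obtain ⟨p, q, hpq⟩ := happ c' (m + k + N)
    refine ⟨m + k, p * i, q * ι i + c' * s, by simp [hi], ?_⟩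
    have hpq' := congrArg l hpq
    simp only [map_add, map_mul, map_pow, smul_eq_mul] at hpq' ⊢
    linear_combination l (ι t) ^ k * c * h + (l (ι i) + l (ι t) ^ (m + N + k) * l s) * hc
      + l (ι i) * hpq'

theorem core_step {P S Pl Sl A B C : Type*} [CommRing P] [CommRing S] [CommRing Pl] [CommRing Sl]
    [CommRing A] [CommRing B] [CommRing C]
    (t : P) (ι : P →+* S) (l : S →+* Sl) (μ : P →+* Pl) (g : Pl →+* Sl)
    (e : Pl →+* A) (φB : S →+* B) (φC : Sl →+* C) (j : A →+* C) (κ : B →+* C)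
    (hl : ∀ y, ∃ (m : ℕ) (s : S), l (ι t) ^ m * y = l s)
    (hl' : ∀ s s', l s = l s' → ∃ L : ℕ, ι t ^ L * s = ι t ^ L * s')
    (hμ : ∀ f, ∃ (m : ℕ) (F : P), μ t ^ m * f = μ F)
    (hμt : IsUnit (μ t))
    (happ : ∀ (s : S) (N : ℕ), ∃ p q, s = ι p + ι t ^ N * q)
    (hdiv : ∀ (p : P) (N : ℕ) (q : S), ι p = ι t ^ N * q → ∃ p', p = t ^ N * p')
    (hg : ∀ p, g (μ p) = l (ι p))
    (hκ : Function.Injective κ)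
    (hφB : Function.Surjective φB)
    (hφCB : ∀ s, φC (l s) = κ (φB s))
    (hφCg : ∀ f, φC (g f) = j (e f))
    (hK : RingHom.ker φC = Ideal.map g (RingHom.ker e))
    (F : P) (a : A) (b : B) (hab : j a = κ b)
    (hFa : e (μ F) = e (μ t) * a) (hFb : φB (ι F) = φB (ι t) * b) :
    ∃ H, e (μ H) = a ∧ φB (ι H) = b := by
  obtain ⟨h, rfl⟩ := hφB b
  have hmem : l (ι F - ι t * h) ∈ Ideal.map g (RingHom.ker e) := by
    rw [← hK, RingHom.mem_ker, hφCB, map_sub, map_mul, hFb, sub_self, map_zero]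
  obtain ⟨m, i, s, hi, hh⟩ := core_approx t ι l μ g e hl hμ happ hg _ hmem 1
  obtain ⟨L, hL⟩ := hl' (ι (t ^ m * F - i)) (ι t ^ (m + 1) * (s + h)) (by
    simp only [map_sub, map_mul, map_pow, map_add] at hh ⊢
    linear_combination hh)
  obtain ⟨H, hH⟩ := hdiv (t ^ L * (t ^ m * F - i)) (L + m + 1) (s + h) (by
    simp only [map_mul, map_pow] at hL ⊢
    rw [hL]; ring)
  have hu : IsUnit (e (μ t)) := hμt.map e
  have hHa : e (μ H) = a := by
    have h2 := congrArg (fun z => e (μ z)) hH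
    simp only [map_sub, map_mul, map_pow, hi, hFa] at h2
    apply (hu.pow (L + m + 1)).mul_left_cancel
    linear_combination -h2
  refine ⟨H, hHa, hκ ?_⟩
  rw [← hφCB, ← hg, hφCg, hHa, hab]

theorem core_all {P S Pl Sl A B C : Type*} [CommRing P] [CommRing S] [CommRing Pl] [CommRing Sl]
    [CommRing A] [CommRing B] [CommRing C]
    (t : P) (ι : P →+* S) (l : S →+* Sl) (μ : P →+* Pl) (g : Pl →+* Sl)
    (e : Pl →+* A) (φB : S →+* B) (φC : Sl →+* C) (j : A →+* C) (κ : B →+* C)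
    (hl : ∀ y, ∃ (m : ℕ) (s : S), l (ι t) ^ m * y = l s)
    (hl' : ∀ s s', l s = l s' → ∃ L : ℕ, ι t ^ L * s = ι t ^ L * s')
    (hμ : ∀ f, ∃ (m : ℕ) (F : P), μ t ^ m * f = μ F)
    (hμt : IsUnit (μ t))
    (happ : ∀ (s : S) (N : ℕ), ∃ p q, s = ι p + ι t ^ N * q)
    (hdiv : ∀ (p : P) (N : ℕ) (q : S), ι p = ι t ^ N * q → ∃ p', p = t ^ N * p')
    (hg : ∀ p, g (μ p) = l (ι p))
    (hκ : Function.Injective κ)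
    (he : Function.Surjective e)
    (hφB : Function.Surjective φB)
    (hφCB : ∀ s, φC (l s) = κ (φB s))
    (hφCg : ∀ f, φC (g f) = j (e f))
    (hK : RingHom.ker φC = Ideal.map g (RingHom.ker e))
    (a : A) (b : B) (hab : j a = κ b) :
    ∃ H, e (μ H) = a ∧ φB (ι H) = b := by
  have key : ∀ (p : P), j (e (μ p)) = κ (φB (ι p)) := fun p => by
    rw [← hφCB, ← hg, hφCg]
  have main : ∀ (m : ℕ) (F : P) (a : A) (b : B), j a = κ b → e (μ F) = e (μ t) ^ m * a →
      φB (ι F) = φB (ι t) ^ m * b → ∃ H, e (μ H) = a ∧ φB (ι H) = b := by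
    intro m
    induction m with
    | zero => intro F a b _ h1 h2; exact ⟨F, by simpa using h1, by simpa using h2⟩
    | succ m ih =>
      intro F a b hab h1 h2
      obtain ⟨G, hG1, hG2⟩ := ih F (e (μ t) * a) (φB (ι t) * b)
        (by rw [map_mul, map_mul, key, hab]) (by rw [h1]; ring) (by rw [h2]; ring)
      exact core_step t ι l μ g e φB φC j κ hl hl' hμ hμt happ hdiv hg hκ hφB hφCB hφCg hK
        G a b hab hG1 hG2
  obtain ⟨f, rfl⟩ := he a
  obtain ⟨m, F, hF⟩ := hμ f
  have h1 : e (μ F) = e (μ t) ^ m * e f := by rw [← hF, map_mul, map_pow]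
  refine main m F _ b hab h1 (hκ ?_)
  rw [← key, h1, map_mul, map_mul, map_pow, map_pow, key, hab]


theorem surj_of_adic {P B : Type*} [CommRing P] [CommRing B] (t : P)
    (φ : AdicCompletion (Ideal.span {t}) P →+* B) (u : B) (hu : φ (algebraMap P _ t) = u)
    (hB : IsHausdorff (Ideal.span {u}) B)
    (h : ∀ b : B, ∃ p : P, b - φ (algebraMap P _ p) ∈ Ideal.span {u}) :
    Function.Surjective φ := by
  have hfg : (Ideal.span {t}).FG := ⟨{t}, by simp⟩
  have h1 : IsAdicComplete (Ideal.span {t}) (AdicCompletion (Ideal.span {t}) P) :=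
    AdicCompletion.isAdicComplete hfg
  have h2 : IsPrecomplete ((Ideal.span {t}).map
      (algebraMap P (AdicCompletion (Ideal.span {t}) P))) (AdicCompletion (Ideal.span {t}) P) :=
    IsPrecomplete.map_algebraMap_iff.2 h1.toIsPrecomplete
  have h3 : ((Ideal.span {t}).map
      (algebraMap P (AdicCompletion (Ideal.span {t}) P))).map φ = Ideal.span {u} := by
    rw [Ideal.map_span, Set.image_singleton, Ideal.map_span, Set.image_singleton, hu]
  have h4 : IsHausdorff (((Ideal.span {t}).map
      (algebraMap P (AdicCompletion (Ideal.span {t}) P))).map φ) B := by rw [h3]; exact hB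
  refine surjective_of_mk_map_comp_surjective (I := (Ideal.span {t}).map
      (algebraMap P (AdicCompletion (Ideal.span {t}) P))) φ ?_
  intro y
  obtain ⟨b, rfl⟩ := Ideal.Quotient.mk_surjective y
  obtain ⟨p, hp⟩ := h b
  refine ⟨algebraMap P _ p, ?_⟩
  rw [RingHom.comp_apply, eq_comm, Ideal.Quotient.eq, h3]
  exact hp

theorem adjoin_approx {R B : Type*} [CommRing R] (π : R) [CommRing B] [Algebra R B]
    [Algebra (AdicCompletion (Ideal.span {π}) R) B]
    [IsScalarTower R (AdicCompletion (Ideal.span {π}) R) B] {n : ℕ} (y : Fin n → B) (b : B)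
    (hb : b ∈ Algebra.adjoin (AdicCompletion (Ideal.span {π}) R) (Set.range y)) :
    ∃ p : MvPolynomial (Fin n) R, b - MvPolynomial.aeval y p ∈ Ideal.span {algebraMap R B π} := by
  induction hb using Algebra.adjoin_induction with
  | mem b hb =>
    obtain ⟨i, rfl⟩ := hb
    exact ⟨MvPolynomial.X i, by simp⟩
  | algebraMap r =>
    obtain ⟨p, q, hpq⟩ := adic_approx π r 1
    refine ⟨MvPolynomial.C p, ?_⟩
    rw [Ideal.mem_span_singleton]
    refine ⟨algebraMap _ B q, ?_⟩
    rw [hpq, map_add, map_mul, map_pow, ← IsScalarTower.algebraMap_apply,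
      ← IsScalarTower.algebraMap_apply, MvPolynomial.aeval_C]
    ring
  | add a b _ _ iha ihb =>
    obtain ⟨p, hp⟩ := iha
    obtain ⟨q, hq⟩ := ihb
    refine ⟨p + q, ?_⟩
    rw [map_add, add_sub_add_comm]
    exact Ideal.add_mem _ hp hq
  | mul a b _ _ iha ihb =>
    obtain ⟨p, hp⟩ := iha
    obtain ⟨q, hq⟩ := ihb
    refine ⟨p * q, ?_⟩
    have := Ideal.add_mem _ (Ideal.mul_mem_right b _ hp)
      (Ideal.mul_mem_left _ (MvPolynomial.aeval y p) hq)
    rw [map_mul]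
    convert this using 1
    ring

theorem mv_denominators {R : Type*} [CommRing R] (π : R) {n : ℕ}
    (f : MvPolynomial (Fin n) (Localization.Away π)) :
    ∃ (m : ℕ) (F : MvPolynomial (Fin n) R),
      (MvPolynomial.map (algebraMap R (Localization.Away π)) (MvPolynomial.C π)) ^ m * f
        = MvPolynomial.map (algebraMap R (Localization.Away π)) F := by
  induction f using MvPolynomial.induction_on with
  | C a =>
    obtain ⟨m, r, hr⟩ := IsLocalization.Away.surj π a
    refine ⟨m, MvPolynomial.C r, ?_⟩
    rw [MvPolynomial.map_C, MvPolynomial.map_C, ← hr, map_mul, map_pow, mul_comm]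
  | add f g hf hg =>
    obtain ⟨m, F, hF⟩ := hf
    obtain ⟨m', G, hG⟩ := hg
    refine ⟨m + m', MvPolynomial.C π ^ m' * F + MvPolynomial.C π ^ m * G, ?_⟩
    rw [map_add, map_mul, map_mul, map_pow, map_pow, ← hF, ← hG]
    ring
  | mul_X f i hf =>
    obtain ⟨m, F, hF⟩ := hf
    refine ⟨m, F * MvPolynomial.X i, ?_⟩
    rw [map_mul, ← hF, MvPolynomial.map_X]
    ring


/-- Let `R` be Noetherian, `π ∈ R`, `A` a finitely generated
`R[1/π]`-algebra, `B` a `π`-adically complete, `π`-torsionfree `R̂`-algebra, `C = B[1/π]`, and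
`j : A → C` an `R[1/π]`-algebra map. Let `D = A ×_C B` and suppose `x₁, …, xₙ ∈ D` are such
that: their images generate `A` over `R[1/π]`; their images topologically generate `B` over
`R̂`; the kernel `K` of `R̂[1/π]⟨x⟩ → C` equals `I·R̂[1/π]⟨x⟩`, where `I` is the kernel of
`R[1/π][x] → A`; and the kernel `J` of `R̂⟨x⟩ → B` equals `K ∩ R̂⟨x⟩`. Then `D` is generated
as an `R`-algebra by `x₁, …, xₙ`. Here `R̂⟨x⟩` is realized as the `π`-adic completion `Phat` of
`P = R[x₁,…,xₙ]`, and `R̂[1/π]⟨x⟩` as `Phatπ = Phat[1/π]`; the evaluation maps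
`φB : R̂⟨x⟩ → B`, `φC : R̂[1/π]⟨x⟩ → C` and `g : R[1/π][x] → R̂[1/π]⟨x⟩` are given as data,
characterized by their compatibility with the canonical maps from `P`. -/
theorem statement10 (R : Type*) [CommRing R] [IsNoetherianRing R] (π : R)
    (A : Type*) [CommRing A] [Algebra R A] [Algebra (Localization.Away π) A]
    [IsScalarTower R (Localization.Away π) A]
    (B : Type*) [CommRing B] [Algebra R B]
    [Algebra (AdicCompletion (Ideal.span {π}) R) B]
    [IsScalarTower R (AdicCompletion (Ideal.span {π}) R) B]
    (hBcomplete : IsAdicComplete (Ideal.span {algebraMap R B π}) B)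
    (hBtf : Function.Injective (fun b : B => algebraMap R B π * b))
    -- C = B[1/π]
    (j : A →+* Localization.Away (algebraMap R B π))
    (hj : ∀ r : R, j (algebraMap R A r)
      = algebraMap B (Localization.Away (algebraMap R B π)) (algebraMap R B r))
    -- D = A ×_C B as a subring of A × B
    (n : ℕ)
    (x : Fin n → ((j.comp (RingHom.fst A B)).eqLocus
      ((algebraMap B (Localization.Away (algebraMap R B π))).comp (RingHom.snd A B))))
    -- (1) the images of the `x i` generate `A` over `R[1/π]`
    (hgenA : Algebra.adjoin (Localization.Away π)
      (Set.range fun i => ((x i : A × B).1)) = ⊤)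
    -- (2) the images of the `x i` topologically generate `B` over `R̂`
    (hgenB : ∀ (b : B) (k : ℕ),
      ∃ b' ∈ Algebra.adjoin (AdicCompletion (Ideal.span {π}) R)
        (Set.range fun i => ((x i : A × B).2)),
        b - b' ∈ Ideal.span {algebraMap R B π} ^ k)
    -- the maps from restricted power series, given as data
    (g : MvPolynomial (Fin n) (Localization.Away π) →+*
      Localization.Away (algebraMap (MvPolynomial (Fin n) R)
        (AdicCompletion (Ideal.span {(MvPolynomial.C π : MvPolynomial (Fin n) R)})
          (MvPolynomial (Fin n) R)) (MvPolynomial.C π)))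
    (hg : g.comp (MvPolynomial.map (algebraMap R (Localization.Away π)))
      = (algebraMap _ _).comp (algebraMap (MvPolynomial (Fin n) R)
          (AdicCompletion (Ideal.span {(MvPolynomial.C π : MvPolynomial (Fin n) R)})
            (MvPolynomial (Fin n) R))))
    (φB : AdicCompletion (Ideal.span {(MvPolynomial.C π : MvPolynomial (Fin n) R)})
        (MvPolynomial (Fin n) R) →+* B)
    (hφB : φB.comp (algebraMap (MvPolynomial (Fin n) R)
        (AdicCompletion (Ideal.span {(MvPolynomial.C π : MvPolynomial (Fin n) R)})
          (MvPolynomial (Fin n) R)))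
      = (MvPolynomial.aeval (R := R) (fun i => ((x i : A × B).2))).toRingHom)
    (φC : Localization.Away (algebraMap (MvPolynomial (Fin n) R)
        (AdicCompletion (Ideal.span {(MvPolynomial.C π : MvPolynomial (Fin n) R)})
          (MvPolynomial (Fin n) R)) (MvPolynomial.C π)) →+*
      Localization.Away (algebraMap R B π))
    (hφCB : φC.comp (algebraMap _ _)
      = (algebraMap B (Localization.Away (algebraMap R B π))).comp φB)
    (hφCg : φC.comp g
      = j.comp (MvPolynomial.aeval (R := Localization.Away π)
          (fun i => ((x i : A × B).1))).toRingHom)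
    -- (3) K = I·R̂[1/π]⟨x⟩
    (hK : RingHom.ker φC = Ideal.map g
      (RingHom.ker (MvPolynomial.aeval (R := Localization.Away π)
        (fun i => ((x i : A × B).1))).toRingHom))
    -- (4) J = K ∩ R̂⟨x⟩
    (hJ : RingHom.ker φB = Ideal.comap (algebraMap _ _) (RingHom.ker φC)) :
    -- conclusion: D is generated as an R-algebra by the `x i`
    Subring.closure
        ((Set.range fun i => (x i : A × B)) ∪
          Set.range ((algebraMap R A).prod (algebraMap R B)))
      = (j.comp (RingHom.fst A B)).eqLocus
          ((algebraMap B (Localization.Away (algebraMap R B π))).comp (RingHom.snd A B)) := by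
  have hC : ∀ r : R, φB (algebraMap (MvPolynomial (Fin n) R) _ (MvPolynomial.C r))
      = algebraMap R B r := fun r => by
    have := congrArg (fun f => f (MvPolynomial.C r)) hφB
    simpa using this
  have hφB' : ∀ p, φB (algebraMap (MvPolynomial (Fin n) R) _ p)
      = MvPolynomial.aeval (fun i => ((x i : A × B).2)) p := fun p =>
    congrArg (fun f => f p) hφB
  have hsurj : Function.Surjective φB := by
    refine surj_of_adic (MvPolynomial.C π) φB (algebraMap R B π) (hC π)
      hBcomplete.toIsHausdorff fun b => ?_
    obtain ⟨b', hb', hbb⟩ := hgenB b 1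
    obtain ⟨p, hp⟩ := adjoin_approx π _ b' hb'
    refine ⟨p, ?_⟩
    rw [hφB', ← sub_add_sub_cancel b b']
    rw [pow_one] at hbb
    exact Ideal.add_mem _ hbb hp
  have hκ : Function.Injective (algebraMap B (Localization.Away (algebraMap R B π))) := by
    refine IsLocalization.injective _ (M := Submonoid.powers (algebraMap R B π)) ?_
    rw [Submonoid.powers_le, mem_nonZeroDivisors_iff_right]
    intro b hb
    apply hBtf
    simpa [mul_comm] using hb
  have heA : ∀ p : MvPolynomial (Fin n) R,
      MvPolynomial.aeval (R := Localization.Away π) (fun i => ((x i : A × B).1))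
        (MvPolynomial.map (algebraMap R (Localization.Away π)) p)
      = MvPolynomial.aeval (R := R) (fun i => ((x i : A × B).1)) p := fun p => by
    rw [MvPolynomial.aeval_map_algebraMap]
  have he : Function.Surjective (MvPolynomial.aeval (R := Localization.Away π)
      (fun i => ((x i : A × B).1))).toRingHom := by
    intro a
    have ha : a ∈ Algebra.adjoin (Localization.Away π)
      (Set.range fun i => ((x i : A × B).1)) := by rw [hgenA]; trivial
    rw [Algebra.adjoin_range_eq_range_aeval] at ha
    exact ha
  apply le_antisymm
  · rw [Subring.closure_le]
    rintro _ (⟨i, rfl⟩ | ⟨r, rfl⟩)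
    · exact (x i).2
    · exact hj r
  · rintro ⟨a, b⟩ hab
    obtain ⟨H, hH1, hH2⟩ := core_all (MvPolynomial.C π : MvPolynomial (Fin n) R)
      (algebraMap (MvPolynomial (Fin n) R)
        (AdicCompletion (Ideal.span {(MvPolynomial.C π : MvPolynomial (Fin n) R)})
          (MvPolynomial (Fin n) R)))
      (algebraMap _ (Localization.Away (algebraMap (MvPolynomial (Fin n) R)
        (AdicCompletion (Ideal.span {(MvPolynomial.C π : MvPolynomial (Fin n) R)})
          (MvPolynomial (Fin n) R)) (MvPolynomial.C π))))
      (MvPolynomial.map (algebraMap R (Localization.Away π))) g _ φB φC j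
      (algebraMap B (Localization.Away (algebraMap R B π)))
      (fun y => by
        obtain ⟨m, s, hs⟩ := IsLocalization.Away.surj (algebraMap (MvPolynomial (Fin n) R)
          (AdicCompletion (Ideal.span {(MvPolynomial.C π : MvPolynomial (Fin n) R)})
            (MvPolynomial (Fin n) R)) (MvPolynomial.C π)) y
        exact ⟨m, s, by rw [← hs, mul_comm]⟩)
      (fun s s' h => by
        obtain ⟨c, hc⟩ := (IsLocalization.eq_iff_exists (Submonoid.powers
          (algebraMap (MvPolynomial (Fin n) R)
          (AdicCompletion (Ideal.span {(MvPolynomial.C π : MvPolynomial (Fin n) R)})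
            (MvPolynomial (Fin n) R)) (MvPolynomial.C π))) _).1 h
        obtain ⟨L, hL⟩ := c.2
        refine ⟨L, ?_⟩
        beta_reduce at hL
        rw [hL]
        exact hc)
      (mv_denominators π)
      (by
        rw [MvPolynomial.map_C]
        exact (IsLocalization.Away.algebraMap_isUnit π).map MvPolynomial.C)
      (adic_approx _) (adic_div _)
      (fun p => congrArg (fun f => f p) hg)
      hκ he hsurj
      (fun s => congrArg (fun f => f s) hφCB)
      (fun f => congrArg (fun k => k f) hφCg)
      hK a b hab
    have h1 : MvPolynomial.aeval (R := R) (fun i => ((x i : A × B).1)) H = a := by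
      rw [← heA]; exact hH1
    rw [hφB'] at hH2
    rw [← h1, ← hH2]
    clear h1 hH1 hH2 hab
    induction H using MvPolynomial.induction_on with
    | C r =>
      rw [MvPolynomial.aeval_C, MvPolynomial.aeval_C]
      exact Subring.subset_closure (Or.inr ⟨r, rfl⟩)
    | add p q hp hq =>
      rw [map_add, map_add, ← Prod.mk_add_mk]
      exact add_mem hp hq
    | mul_X p i hp =>
      rw [map_mul, map_mul, MvPolynomial.aeval_X, MvPolynomial.aeval_X, ← Prod.mk_mul_mk]
      exact mul_mem hp (Subring.subset_closure (Or.inl ⟨i, rfl⟩))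
end

section
/- Let A be a Noetherian ring and I = (π) a principal ideal generated by a non-zerodivisor. Then the functor sending a finitely presented A-module M to the triple (M[1/π], M ⊗_A Â, canonical isomorphism over Â[1/π]) is an equivalence from finitely presented A-modules to the category of triples (F, N, ι) where F is a finitely presented A[1/π]-module, N is a finitely presented Â-module, and ι: F ⊗_{A[1/π]} Â[1/π] ≅ N[1/π] is an isomorphism. A quasi-inverse sends (F, N, ι) to the fiber product F ×_{N[1/π]} N. -/
open TensorProduct
set_option linter.unusedSectionVars false

/-- The properties of the completion used in the gluing argument. -/
structure BLData (A B : Type*) [CommRing A] [CommRing B] [Algebra A B] (π : A) : Prop where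
  flat : Module.Flat A B
  approx : ∀ (n : ℕ) (b : B), ∃ (a : A) (b' : B),
    b = algebraMap A B a + algebraMap A B (π ^ n) * b'
  ev : ∀ n : ℕ, ∃ e : B →ₗ[A] (A ⧸ Ideal.span {π ^ n}), e 1 = Ideal.Quotient.mk _ 1
  jac : algebraMap A B π ∈ Ideal.jacobson (⊥ : Ideal B)

theorem blData_completion (A : Type*) [CommRing A] [IsNoetherianRing A] (π : A) :
    BLData A (AdicCompletion (Ideal.span {π}) A) π := by
  have hfg : (Ideal.span {π}).FG := ⟨{π}, by simp⟩
  refine ⟨inferInstance, ?_, ?_, ?_⟩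
  · intro n b
    obtain ⟨a, ha⟩ := Ideal.Quotient.mk_surjective (AdicCompletion.eval (Ideal.span {π}) A n b)
    have hk : b - algebraMap A (AdicCompletion (Ideal.span {π}) A) a ∈
        (AdicCompletion.eval (Ideal.span {π}) A n).ker := by
      rw [LinearMap.mem_ker, map_sub, ← ha]
      exact sub_self _
    rw [← AdicCompletion.pow_smul_top_eq_ker_eval hfg, Ideal.span_singleton_pow,
      Submodule.ideal_span_singleton_smul, Submodule.mem_smul_pointwise_iff_exists] at hk
    obtain ⟨b', -, hb'⟩ := hk
    refine ⟨a, b', ?_⟩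
    rw [← Algebra.smul_def]
    exact (sub_eq_iff_eq_add'.mp hb'.symm)
  · intro n
    rw [← Ideal.span_singleton_pow]
    exact ⟨(AdicCompletion.evalₐ (Ideal.span {π}) n).toLinearMap, by simp⟩
  · have h := AdicCompletion.isAdicComplete (M := A) hfg
    rw [← IsAdicComplete.map_algebraMap_iff (S := AdicCompletion (Ideal.span {π}) A)] at h
    exact IsAdicComplete.le_jacobson_bot _
      (Ideal.mem_map_of_mem _ (Ideal.mem_span_singleton_self π))

section
variable {A B : Type*} [CommRing A] [CommRing B] [Algebra A B] {π : A}
  {M : Type*} [AddCommGroup M] [Module A M]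

theorem BLData.inj_killed (H : BLData A B π) (n : ℕ) (hM : ∀ m : M, π ^ n • m = 0) (t : M)
    (ht : (1 : B) ⊗ₜ[A] t = 0) : t = 0 := by
  obtain ⟨e, he⟩ := H.ev n
  let q : (A ⧸ Ideal.span {π ^ n}) →ₗ[A] (M →ₗ[A] M) :=
    Submodule.liftQ (Ideal.span {π ^ n}) (LinearMap.lsmul A M) (by
      rw [Ideal.span, Submodule.span_le]
      rintro _ rfl
      ext m
      exact hM m)
  have h1 := congrArg (TensorProduct.lift (q ∘ₗ e)) ht
  rw [TensorProduct.lift.tmul, map_zero, LinearMap.comp_apply, he] at h1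
  simpa [q] using (show LinearMap.lsmul A M 1 t = 0 from h1)

theorem BLData.inj_tors (H : BLData A B π) (n : ℕ) (t : M) (hn : π ^ n • t = 0)
    (ht : (1 : B) ⊗ₜ[A] t = 0) : t = 0 := by
  have := H.flat
  have hi := Module.Flat.lTensor_preserves_injective_linearMap (M := B)
    (Submodule.span A {t}).subtype (Submodule.injective_subtype _)
  have h2 : (1 : B) ⊗ₜ[A] (⟨t, Submodule.mem_span_singleton_self t⟩ : Submodule.span A {t}) = 0 := by
    apply hi
    simpa using ht
  have := H.inj_killed n (M := Submodule.span A {t}) (by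
    rintro ⟨m, hm⟩
    obtain ⟨a, rfl⟩ := Submodule.mem_span_singleton.mp hm
    ext
    simp [smul_comm (π ^ n) a, hn]) _ h2
  exact congrArg Subtype.val this

theorem BLData.surj_tors (H : BLData A B π) (hM : ∀ m : M, ∃ n : ℕ, π ^ n • m = 0) (z : B ⊗[A] M) :
    ∃ m : M, z = 1 ⊗ₜ[A] m := by
  induction z with
  | zero => exact ⟨0, by simp⟩
  | tmul b m =>
    obtain ⟨n, hn⟩ := hM m
    obtain ⟨a, b', rfl⟩ := H.approx n b
    refine ⟨a • m, ?_⟩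
    rw [← Algebra.smul_def, add_tmul, smul_tmul, hn, tmul_zero, add_zero,
      Algebra.algebraMap_eq_smul_one, smul_tmul]
  | add x y hx hy =>
    obtain ⟨x, rfl⟩ := hx
    obtain ⟨y, rfl⟩ := hy
    exact ⟨x + y, by rw [tmul_add]⟩

/-- If the kernel of `f` is `π`-power torsion, then so is that of its base change. -/
theorem BLData.ker_surj (H : BLData A B π) {P : Type*} [AddCommGroup P] [Module A P] (f : M →ₗ[A] P)
    (hf : ∀ m : M, f m = 0 → ∃ n : ℕ, π ^ n • m = 0) (z : B ⊗[A] M)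
    (hz : f.lTensor B z = 0) : ∃ m : M, f m = 0 ∧ z = 1 ⊗ₜ[A] m := by
  have := H.flat
  have hex := Module.Flat.lTensor_exact B (f := (LinearMap.ker f).subtype) (g := f)
    (LinearMap.exact_subtype_ker_map f)
  obtain ⟨w, rfl⟩ := (hex z).mp hz
  obtain ⟨m, rfl⟩ := H.surj_tors (M := LinearMap.ker f) (by
    rintro ⟨m, hm⟩
    obtain ⟨n, hn⟩ := hf m hm
    exact ⟨n, Subtype.ext hn⟩) w
  exact ⟨m.1, m.2, by simp⟩

theorem BLData.tors (H : BLData A B π) (k : ℕ) (z : B ⊗[A] M) (hz : π ^ k • z = 0) :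
    ∃ m : M, π ^ k • m = 0 ∧ z = 1 ⊗ₜ[A] m := by
  refine H.ker_surj (LinearMap.lsmul A M (π ^ k)) (fun m hm => ⟨k, hm⟩) z ?_
  rw [← hz]
  clear hz
  induction z with
  | zero => simp
  | tmul b m => simp [TensorProduct.smul_tmul']
  | add x y hx hy => rw [map_add, hx, hy, smul_add]

theorem BLData.div (H : BLData A B π) (n : ℕ) (x : M) (w : B ⊗[A] M) (h : (1 : B) ⊗ₜ[A] x = π ^ n • w) :
    ∃ z, x = π ^ n • z := by
  let P : Submodule A M := LinearMap.range (LinearMap.lsmul A M (π ^ n))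
  have hk : ∀ m : M ⧸ P, π ^ n • m = 0 := by
    intro m
    obtain ⟨m, rfl⟩ := P.mkQ_surjective m
    rw [← map_smul]
    exact (Submodule.Quotient.mk_eq_zero P).mpr ⟨m, rfl⟩
  have h2 := congrArg (P.mkQ.lTensor B) h
  have h3 : ∀ w : B ⊗[A] (M ⧸ P), π ^ n • w = 0 := by
    intro w
    induction w with
    | zero => simp
    | tmul b m => rw [← tmul_smul, hk, tmul_zero]
    | add x y hx hy => rw [smul_add, hx, hy, add_zero]
  rw [map_smul, h3, LinearMap.lTensor_tmul] at h2
  have h4 := H.inj_killed n hk _ h2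
  obtain ⟨z, hz⟩ := (Submodule.Quotient.mk_eq_zero P).mp h4
  exact ⟨z, hz.symm⟩

theorem BLData.part1 (H : BLData A B π) :
      Function.Injective (fun m : M =>
        (LocalizedModule.mkLinearMap (Submonoid.powers π) M m,
          ((1 : B) ⊗ₜ[A] m : B ⊗[A] M))) ∧
      Set.range (fun m : M =>
        (LocalizedModule.mkLinearMap (Submonoid.powers π) M m,
          ((1 : B) ⊗ₜ[A] m : B ⊗[A] M)))
        = {q : LocalizedModule (Submonoid.powers π) M × (B ⊗[A] M) |
            IsLocalizedModule.map (Submonoid.powers π)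
              (LocalizedModule.mkLinearMap (Submonoid.powers π) M)
              (LocalizedModule.mkLinearMap (Submonoid.powers π) (B ⊗[A] M))
              ((TensorProduct.mk A B M) 1) q.1
            = LocalizedModule.mkLinearMap (Submonoid.powers π) (B ⊗[A] M) q.2} := by
  set f := LocalizedModule.mkLinearMap (Submonoid.powers π) M with hf
  set g := LocalizedModule.mkLinearMap (Submonoid.powers π) (B ⊗[A] M) with hg
  constructor
  · intro m m' h
    simp only [Prod.mk.injEq] at h
    obtain ⟨h1, h2⟩ := h
    obtain ⟨⟨_, n, rfl⟩, hn⟩ := IsLocalizedModule.exists_of_eq (S := Submonoid.powers π) h1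
    rw [← sub_eq_zero]
    refine H.inj_tors n (m - m') ?_ ?_
    · rw [smul_sub, sub_eq_zero]
      exact hn
    · rw [tmul_sub, sub_eq_zero, h2]
  · ext ⟨p, y⟩
    simp only [Set.mem_range, Prod.mk.injEq, Set.mem_ofPred_eq]
    constructor
    · rintro ⟨m, rfl, rfl⟩
      rw [IsLocalizedModule.map_apply]
      rfl
    · intro h
      obtain ⟨⟨x, ⟨_, n, rfl⟩⟩, hx⟩ := IsLocalizedModule.surj (Submonoid.powers π) f p
      have hx' : π ^ n • p = f x := hx
      have h1 : g (π ^ n • y) = g ((1 : B) ⊗ₜ[A] x) := by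
        rw [map_smul, ← h, ← map_smul, hx', IsLocalizedModule.map_apply]
        rfl
      obtain ⟨⟨_, k, rfl⟩, hk⟩ := IsLocalizedModule.exists_of_eq (S := Submonoid.powers π) h1
      have hk' : π ^ k • π ^ n • y = π ^ k • ((1 : B) ⊗ₜ[A] x) := hk
      obtain ⟨z, hz⟩ := H.div (k + n) (π ^ k • x) y (by
        rw [tmul_smul, ← hk', pow_add, mul_smul])
      have hp : p = f z := by
        have hinj := fun s => IsLocalizedModule.smul_injective (S := Submonoid.powers π) f s
        apply hinj ⟨π ^ (k + n), k + n, rfl⟩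
        change π ^ (k + n) • p = π ^ (k + n) • f z
        rw [← map_smul, ← hz, pow_add, mul_smul, hx', map_smul]
      have h2 : g (y - (1 : B) ⊗ₜ[A] z) = g 0 := by
        rw [map_sub, ← h, hp, IsLocalizedModule.map_apply, map_zero]
        exact sub_self _
      obtain ⟨⟨_, l, rfl⟩, hl⟩ := IsLocalizedModule.exists_of_eq (S := Submonoid.powers π) h2
      obtain ⟨m, hm, hm'⟩ := H.tors l (y - (1 : B) ⊗ₜ[A] z) (hl.trans (smul_zero _))
      refine ⟨z + m, ?_, ?_⟩
      · have : f m = 0 := (IsLocalizedModule.eq_zero_iff (Submonoid.powers π) f).mpr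
          ⟨⟨π ^ l, l, rfl⟩, hm⟩
        rw [map_add, this, add_zero, hp]
      · rw [tmul_add, ← hm']
        abel
end

section
variable {A B : Type*} [CommRing A] [CommRing B] [Algebra A B] {π : A}
  {F : Type*} [AddCommGroup F] [Module A F] [Module (Localization.Away π) F]
  [IsScalarTower A (Localization.Away π) F]
  {N : Type*} [AddCommGroup N] [Module A N] [Module B N] [IsScalarTower A B N]
  {W : Type*} [AddCommGroup W] [Module B W]

theorem BLData.F_unit (k : ℕ) : ∃ u : Localization.Away π,
    u * algebraMap A (Localization.Away π) (π ^ k) = 1 := by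
  have : IsUnit (algebraMap A (Localization.Away π) (π ^ k)) :=
    IsLocalization.map_units (M := Submonoid.powers π) (Localization.Away π)
      ⟨π ^ k, k, rfl⟩
  obtain ⟨u, hu⟩ := this.exists_left_inv
  exact ⟨u, hu⟩

theorem BLData.F_inj (k : ℕ) (x : F) (hx : π ^ k • x = 0) : x = 0 := by
  obtain ⟨u, hu⟩ := BLData.F_unit (π := π) k
  rw [← one_smul (Localization.Away π) x, ← hu, mul_smul, algebraMap_smul, hx, smul_zero]

theorem BLData.F_div (k : ℕ) (x : F) : ∃ y : F, x = π ^ k • y := by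
  obtain ⟨u, hu⟩ := BLData.F_unit (π := π) k
  refine ⟨u • x, ?_⟩
  rw [← algebraMap_smul (Localization.Away π) (π ^ k), ← mul_smul, mul_comm, hu, one_smul]

theorem BLData.loc_smul (y : N) (k : ℕ) : (algebraMap A B π) ^ k • y = π ^ k • y := by
  rw [← map_pow, algebraMap_smul]

variable (h : N →ₗ[B] W)
  [IsLocalizedModule (Submonoid.powers (algebraMap A B π)) h]
  (G : B ⊗[A] F →ₗ[B] W)
  [IsLocalizedModule (Submonoid.powers (algebraMap A B π)) G]
  (M' : Submodule A (F × N))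

theorem BLData.W_inj (h : N →ₗ[B] W) [IsLocalizedModule (Submonoid.powers (algebraMap A B π)) h]
    (k : ℕ) (w w' : W)
    (hw : (algebraMap A B π) ^ k • w = (algebraMap A B π) ^ k • w') : w = w' :=
  IsLocalizedModule.smul_injective (S := Submonoid.powers (algebraMap A B π)) h
    ⟨_, k, rfl⟩ hw

theorem BLData.W_surj (h : N →ₗ[B] W) [IsLocalizedModule (Submonoid.powers (algebraMap A B π)) h]
    (w : W) : ∃ (k : ℕ) (y : N), (algebraMap A B π) ^ k • w = h y := by
  obtain ⟨⟨y, ⟨_, k, rfl⟩⟩, hy⟩ :=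
    IsLocalizedModule.surj (Submonoid.powers (algebraMap A B π)) h w
  exact ⟨k, y, hy⟩

theorem BLData.W_zero (h : N →ₗ[B] W) [IsLocalizedModule (Submonoid.powers (algebraMap A B π)) h]
    (y : N) (hy : h y = 0) : ∃ (k : ℕ), (algebraMap A B π) ^ k • y = 0 := by
  obtain ⟨⟨_, k, rfl⟩, hk⟩ :=
    (IsLocalizedModule.eq_zero_iff (Submonoid.powers (algebraMap A B π)) h).mp hy
  exact ⟨k, hk⟩

theorem BLData.G_smul (G : B ⊗[A] F →ₗ[B] W) (a : A) (x : F) :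
    G (1 ⊗ₜ[A] (a • x)) = algebraMap A B a • G (1 ⊗ₜ[A] x) := by
  rw [← map_smul, tmul_smul, algebraMap_smul]

theorem BLData.sum_surj (H : BLData A B π) (w : W) : ∃ (x : F) (y : N), w = G (1 ⊗ₜ[A] x) + h y := by
  have key : ∀ z : B ⊗[A] F, ∃ (x : F) (y : N), G z = G (1 ⊗ₜ[A] x) + h y := by
    intro z
    induction z with
    | zero => exact ⟨0, 0, by simp⟩
    | tmul b x =>
      obtain ⟨n, y, hy⟩ := BLData.W_surj (π := π) h (G (1 ⊗ₜ[A] x))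
      obtain ⟨a, b', rfl⟩ := H.approx n b
      refine ⟨a • x, b' • y, ?_⟩
      have e : ∀ c : B, G (c ⊗ₜ[A] x) = c • G (1 ⊗ₜ[A] x) := by
        intro c
        rw [← map_smul, smul_tmul', smul_eq_mul, mul_one]
      rw [BLData.G_smul, e, add_smul, mul_comm, mul_smul, map_pow, hy, map_smul]
    | add z z' h1 h2 =>
      obtain ⟨x, y, h1⟩ := h1
      obtain ⟨x', y', h2⟩ := h2
      refine ⟨x + x', y + y', ?_⟩
      rw [map_add, h1, h2, tmul_add, map_add, map_add]
      abel
  obtain ⟨k, z, hz⟩ := BLData.W_surj (π := π) G w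
  have hdiv : ∃ z' : B ⊗[A] F, z = (algebraMap A B π) ^ k • z' := by
    clear hz
    induction z with
    | zero => exact ⟨0, by simp⟩
    | tmul b x =>
      obtain ⟨x', rfl⟩ := BLData.F_div (π := π) k x
      exact ⟨b ⊗ₜ x', by rw [← map_pow, algebraMap_smul, tmul_smul]⟩
    | add z z' h1 h2 =>
      obtain ⟨x, rfl⟩ := h1
      obtain ⟨x', rfl⟩ := h2
      exact ⟨x + x', by rw [smul_add]⟩
  obtain ⟨z', rfl⟩ := hdiv
  rw [map_smul] at hz
  obtain rfl := BLData.W_inj (π := π) h k _ _ hz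
  exact key z'

theorem BLData.M_tors
    (hM' : ∀ q : F × N, q ∈ M' ↔ G (1 ⊗ₜ[A] q.1) = h q.2) (m : M') (hm : m.1.1 = 0) : ∃ k : ℕ, π ^ k • m = 0 := by
  have h1 := (hM' m.1).mp m.2
  rw [hm, tmul_zero, map_zero] at h1
  obtain ⟨k, hk⟩ := BLData.W_zero (π := π) h _ h1.symm
  rw [BLData.loc_smul] at hk
  exact ⟨k, Subtype.ext (Prod.ext (by simp [hm]) hk)⟩

theorem BLData.M_lift
    (hM' : ∀ q : F × N, q ∈ M' ↔ G (1 ⊗ₜ[A] q.1) = h q.2) (x : F) : ∃ (k : ℕ) (m : M'), m.1.1 = π ^ k • x := by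
  obtain ⟨k, y, hy⟩ := BLData.W_surj (π := π) h (G (1 ⊗ₜ[A] x))
  exact ⟨k, ⟨(π ^ k • x, y), (hM' _).mpr (by rw [BLData.G_smul, map_pow, hy])⟩, rfl⟩

theorem BLData.loc
    (hM' : ∀ q : F × N, q ∈ M' ↔ G (1 ⊗ₜ[A] q.1) = h q.2) :
    IsLocalizedModule (Submonoid.powers π) ((LinearMap.fst A F N).comp M'.subtype) where
  map_units := by
    rintro ⟨_, k, rfl⟩
    rw [Module.End.isUnit_iff]
    constructor
    · rw [← LinearMap.ker_eq_bot, LinearMap.ker_eq_bot']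
      exact fun x hx => BLData.F_inj (π := π) k x hx
    · intro x
      obtain ⟨y, hy⟩ := BLData.F_div (π := π) k x
      exact ⟨y, hy.symm⟩
  surj := by
    intro x
    obtain ⟨k, m, hm⟩ := BLData.M_lift (π := π) h G M' hM' x
    exact ⟨⟨m, ⟨π ^ k, k, rfl⟩⟩, hm.symm⟩
  exists_of_eq := by
    intro m m' hmm
    obtain ⟨k, hk⟩ := BLData.M_tors (π := π) h G M' hM' (m - m') (sub_eq_zero.mpr hmm)
    exact ⟨⟨π ^ k, k, rfl⟩, sub_eq_zero.mp ((smul_sub _ _ _).symm.trans hk)⟩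

theorem BLData.bij1
    (hM' : ∀ q : F × N, q ∈ M' ↔ G (1 ⊗ₜ[A] q.1) = h q.2) : Function.Bijective
    (LinearMap.liftBaseChange (Localization.Away π) ((LinearMap.fst A F N).comp M'.subtype)) :=
  (isLocalizedModule_iff_isBaseChange (Submonoid.powers π) (Localization.Away π) _).mp
    (BLData.loc (π := π) h G M' hM')

theorem BLData.span_snd (H : BLData A B π)
    (hM' : ∀ q : F × N, q ∈ M' ↔ G (1 ⊗ₜ[A] q.1) = h q.2) [Module.Finite B N] :
    Submodule.span B (Set.range fun m : M' => m.1.2) = ⊤ := by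
  rw [← top_le_iff]
  have hI : Ideal.span {algebraMap A B π} ≤ Ideal.jacobson ⊥ := by
    rw [Ideal.span_le, Set.singleton_subset_iff]
    exact H.jac
  refine Submodule.le_of_le_smul_of_le_jacobson_bot Module.Finite.fg_top hI ?_
  intro y _
  obtain ⟨w, hw⟩ : ∃ w : W, algebraMap A B π • w = h y := by
    have := IsLocalizedModule.map_units h
      (⟨_, Submonoid.mem_powers _⟩ : Submonoid.powers (algebraMap A B π))
    rw [Module.End.isUnit_iff] at this
    exact this.2 (h y)
  obtain ⟨x, y', rfl⟩ := H.sum_surj h G w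
  rw [← sub_add_cancel y (algebraMap A B π • y')]
  refine Submodule.add_mem_sup (Submodule.subset_span
    ⟨⟨(π • x, y - algebraMap A B π • y'), (hM' _).mpr ?_⟩, rfl⟩)
    (Submodule.smul_mem_smul (Ideal.mem_span_singleton_self _) trivial)
  rw [BLData.G_smul, map_sub, ← hw, smul_add, map_smul]
  abel

theorem BLData.bij2 (H : BLData A B π)
    (hM' : ∀ q : F × N, q ∈ M' ↔ G (1 ⊗ₜ[A] q.1) = h q.2) [Module.Finite B N] : Function.Bijective
    (LinearMap.liftBaseChange B ((LinearMap.snd A F N).comp M'.subtype)) := by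
  set φ := LinearMap.liftBaseChange B ((LinearMap.snd A F N).comp M'.subtype) with hφ
  constructor
  · rw [← LinearMap.ker_eq_bot, LinearMap.ker_eq_bot']
    intro z hz
    let ψ := ((LinearMap.fst A F N).comp M'.subtype)
    have hcomm : ∀ z : B ⊗[A] M', G (ψ.lTensor B z) = h (φ z) := by
      intro z
      induction z with
      | zero => simp
      | tmul b m =>
        have := (hM' m.1).mp m.2
        have e : G (b ⊗ₜ[A] m.1.1) = b • G (1 ⊗ₜ[A] m.1.1) := by
          rw [← map_smul, smul_tmul', smul_eq_mul, mul_one]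
        rw [LinearMap.lTensor_tmul, hφ, LinearMap.liftBaseChange_tmul, map_smul]
        change G (b ⊗ₜ[A] m.1.1) = b • h m.1.2
        rw [e, this]
      | add x y hx hy => rw [map_add, map_add, map_add, map_add, hx, hy]
    have h0 := hcomm z
    rw [hz, map_zero] at h0
    obtain ⟨k, hk⟩ := BLData.W_zero (π := π) G _ h0
    rw [← map_pow, algebraMap_smul, ← map_smul] at hk
    obtain ⟨m, hm0, hm⟩ := H.ker_surj ψ (fun m hm => BLData.M_tors (π := π) h G M' hM' m hm) _ hk
    obtain ⟨l, hl⟩ := BLData.M_tors (π := π) h G M' hM' m hm0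
    obtain ⟨m', hm'0, rfl⟩ := H.tors (l + k) z (by
      rw [pow_add, mul_smul, hm, ← tmul_smul, hl, tmul_zero])
    have h1 : m'.1.1 = 0 := BLData.F_inj (π := π) (l + k) _ (congrArg (fun t : M' => t.1.1) hm'0)
    have h2 : m'.1.2 = 0 := by
      rw [hφ, LinearMap.liftBaseChange_tmul, one_smul] at hz
      exact hz
    have : m' = 0 := Subtype.ext (Prod.ext h1 h2)
    rw [this, tmul_zero]
  · rw [← LinearMap.range_eq_top, ← top_le_iff, ← H.span_snd h G M' hM', Submodule.span_le]
    rintro _ ⟨m, rfl⟩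
    exact ⟨1 ⊗ₜ m, by rw [hφ, LinearMap.liftBaseChange_tmul, one_smul]; rfl⟩

theorem BLData.fin (H : BLData A B π)
    (hM' : ∀ q : F × N, q ∈ M' ↔ G (1 ⊗ₜ[A] q.1) = h q.2) [Module.Finite B N] [Module.Finite (Localization.Away π) F] :
    Module.Finite A M' := by
  classical
  obtain ⟨s1, hs1, hs1'⟩ := (Submodule.fg_span_iff_fg_span_finset_subset _).mp
    ((H.span_snd h G M' hM').symm ▸ (Module.Finite.fg_top (R := B) (M := N)))
  obtain ⟨s2, hs2⟩ := Module.Finite.fg_top (R := Localization.Away π) (M := F)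
  rw [H.span_snd h G M' hM'] at hs1'
  choose c1 hc1 using hs1
  choose k c2 hc2 using fun x : F => BLData.M_lift (π := π) h G M' hM' x
  let S : Set M' := Set.range (fun y : s1 => c1 y.2) ∪ Set.range (fun x : s2 => c2 x.1)
  have hSfin : S.Finite := (Set.finite_range _).union (Set.finite_range _)
  let M1 := Submodule.span A S
  -- every element of `F` has a multiple in the image of `M1`
  have hF : ∀ x : F, ∃ (l : ℕ) (m : M'), m ∈ M1 ∧ m.1.1 = π ^ l • x := by
    intro x
    have hx : x ∈ Submodule.span (Localization.Away π) (s2 : Set F) := hs2 ▸ trivial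
    induction hx using Submodule.span_induction with
    | mem x hx => exact ⟨k x, c2 x, Submodule.subset_span (Or.inr ⟨⟨x, hx⟩, rfl⟩), hc2 x⟩
    | zero => exact ⟨0, 0, zero_mem _, by simp⟩
    | add x y _ _ hx hy =>
      obtain ⟨l, m, hm, e⟩ := hx
      obtain ⟨l', m', hm', e'⟩ := hy
      refine ⟨l + l', π ^ l' • m + π ^ l • m', add_mem (M1.smul_mem _ hm) (M1.smul_mem _ hm'), ?_⟩
      change π ^ l' • m.1.1 + π ^ l • m'.1.1 = _
      rw [e, e', smul_add, smul_smul, smul_smul, pow_add, mul_comm]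
    | smul c x _ hx =>
      obtain ⟨l, m, hm, e⟩ := hx
      obtain ⟨⟨a, ⟨_, j, rfl⟩⟩, ha⟩ := IsLocalization.surj (Submonoid.powers π) c
      have ha' : c * algebraMap A (Localization.Away π) (π ^ j) =
        algebraMap A (Localization.Away π) a := ha
      refine ⟨l + j, a • m, M1.smul_mem _ hm, ?_⟩
      change a • m.1.1 = _
      rw [e, ← algebraMap_smul (Localization.Away π) a, ← ha',
        ← algebraMap_smul (Localization.Away π) (π ^ l) x,
        ← algebraMap_smul (Localization.Away π) (π ^ (l + j)) (c • x), smul_smul, smul_smul,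
        pow_add, map_mul]
      congr 1
      ring
  have htors : ∀ m : M', ∃ l : ℕ, π ^ l • m ∈ M1 := by
    intro m
    obtain ⟨l, m1, hm1, e⟩ := hF m.1.1
    obtain ⟨j, hj⟩ := BLData.M_tors (π := π) h G M' hM' (π ^ l • m - m1) (by
      change π ^ l • m.1.1 - m1.1.1 = 0
      rw [e, sub_self])
    refine ⟨j + l, ?_⟩
    rw [smul_sub, sub_eq_zero] at hj
    rw [pow_add, mul_smul, hj]
    exact M1.smul_mem _ hm1
  have hbij := H.bij2 h G M' hM'
  set φ := LinearMap.liftBaseChange B ((LinearMap.snd A F N).comp M'.subtype) with hφ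
  have hker : LinearMap.ker (M1.mkQ.baseChange B) = ⊤ := by
    have hmap : Submodule.map φ (LinearMap.ker (M1.mkQ.baseChange B)) = ⊤ := by
      rw [← top_le_iff, hs1', Submodule.span_le]
      intro y hy
      refine ⟨1 ⊗ₜ c1 hy, ?_, ?_⟩
      · have h0 : M1.mkQ (c1 hy) = 0 := (Submodule.Quotient.mk_eq_zero M1).mpr
          (Submodule.subset_span (Or.inl ⟨⟨y, hy⟩, rfl⟩))
        rw [SetLike.mem_coe, LinearMap.mem_ker, LinearMap.baseChange_tmul, h0, tmul_zero]
      · rw [hφ, LinearMap.liftBaseChange_tmul, one_smul]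
        exact hc1 hy
    rw [eq_top_iff]
    intro z _
    have : φ z ∈ Submodule.map φ (LinearMap.ker (M1.mkQ.baseChange B)) := hmap ▸ trivial
    obtain ⟨z', hz', e⟩ := this
    exact hbij.1 e ▸ hz'
  have hM1 : M1 = ⊤ := by
    rw [eq_top_iff]
    intro m _
    obtain ⟨l, hl⟩ := htors m
    refine (Submodule.Quotient.mk_eq_zero M1).mp (H.inj_tors l (M1.mkQ m) ?_ ?_)
    · rw [← map_smul]
      exact (Submodule.Quotient.mk_eq_zero M1).mpr hl
    · have : (1 : B) ⊗ₜ[A] m ∈ LinearMap.ker (M1.mkQ.baseChange B) := hker ▸ trivial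
      exact this
  exact ⟨⟨hSfin.toFinset, by rw [hSfin.coe_toFinset]; exact hM1⟩⟩

end

/-- (Beauville–Laszlo for finitely presented modules.) Let `A` be Noetherian
and `π ∈ A` a non-zerodivisor, `Â` the `π`-adic completion. The functor
`M ↦ (M[1/π], M ⊗_A Â, canonical ι)` from finitely presented `A`-modules to triples
`(F, N, ι)` — `F` a finitely presented `A[1/π]`-module, `N` a finitely presented `Â`-module,
`ι : F ⊗ Â[1/π] ≅ N[1/π]` — is an equivalence, with quasi-inverse `(F, N, ι) ↦ F ×_{N[1/π]} N`.
Concretely: (1) for every finitely presented `A`-module `M₀`, the unit map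
`M₀ → M₀[1/π] ×_{(Â ⊗ M₀)[1/π]} (Â ⊗ M₀)` is bijective (full faithfulness via the canonical
triple); and (2) for every triple `(F, N, ι)`, the fiber product `M` is a finitely presented
`A`-module whose base changes to `A[1/π]` and `Â` recover `F` and `N` (essential surjectivity,
with the fiber product as quasi-inverse). -/
theorem statement11 (A : Type*) [CommRing A] [IsNoetherianRing A]
    (π : A) (hπ : π ∈ nonZeroDivisors A) :
    -- (1) unit of the adjunction is an isomorphism: full faithfulness
    (∀ (M₀ : Type) [AddCommGroup M₀] [Module A M₀] [Module.FinitePresentation A M₀],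
      Function.Injective (fun m : M₀ =>
        (LocalizedModule.mkLinearMap (Submonoid.powers π) M₀ m,
          ((1 : AdicCompletion (Ideal.span {π}) A) ⊗ₜ[A] m :
            AdicCompletion (Ideal.span {π}) A ⊗[A] M₀))) ∧
      Set.range (fun m : M₀ =>
        (LocalizedModule.mkLinearMap (Submonoid.powers π) M₀ m,
          ((1 : AdicCompletion (Ideal.span {π}) A) ⊗ₜ[A] m :
            AdicCompletion (Ideal.span {π}) A ⊗[A] M₀)))
        = {q : LocalizedModule (Submonoid.powers π) M₀ ×
              (AdicCompletion (Ideal.span {π}) A ⊗[A] M₀) |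
            IsLocalizedModule.map (Submonoid.powers π)
              (LocalizedModule.mkLinearMap (Submonoid.powers π) M₀)
              (LocalizedModule.mkLinearMap (Submonoid.powers π)
                (AdicCompletion (Ideal.span {π}) A ⊗[A] M₀))
              ((TensorProduct.mk A (AdicCompletion (Ideal.span {π}) A) M₀) 1) q.1
            = LocalizedModule.mkLinearMap (Submonoid.powers π)
                (AdicCompletion (Ideal.span {π}) A ⊗[A] M₀) q.2}) ∧
    -- (2) essential surjectivity, with the fiber product as quasi-inverse
    (∀ (F : Type) [AddCommGroup F] [Module A F] [Module (Localization.Away π) F]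
        [IsScalarTower A (Localization.Away π) F]
        [Module.FinitePresentation (Localization.Away π) F]
        (N : Type) [AddCommGroup N] [Module A N]
        [Module (AdicCompletion (Ideal.span {π}) A) N]
        [IsScalarTower A (AdicCompletion (Ideal.span {π}) A) N]
        [Module.FinitePresentation (AdicCompletion (Ideal.span {π}) A) N]
        (ι : (Localization.Away
                (algebraMap A (AdicCompletion (Ideal.span {π}) A) π) ⊗[AdicCompletion (Ideal.span {π}) A]
                  (AdicCompletion (Ideal.span {π}) A ⊗[A] F))
              ≃ₗ[Localization.Away (algebraMap A (AdicCompletion (Ideal.span {π}) A) π)]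
             (Localization.Away
                (algebraMap A (AdicCompletion (Ideal.span {π}) A) π) ⊗[AdicCompletion (Ideal.span {π}) A] N)),
      ∃ M' : Submodule A (F × N),
        (↑M' : Set (F × N)) = {q : F × N |
            ι ((1 : Localization.Away (algebraMap A (AdicCompletion (Ideal.span {π}) A) π))
                ⊗ₜ[AdicCompletion (Ideal.span {π}) A]
                  ((1 : AdicCompletion (Ideal.span {π}) A) ⊗ₜ[A] q.1))
              = (1 : Localization.Away (algebraMap A (AdicCompletion (Ideal.span {π}) A) π))
                  ⊗ₜ[AdicCompletion (Ideal.span {π}) A] q.2} ∧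
        Module.FinitePresentation A M' ∧
        Function.Bijective
          (LinearMap.liftBaseChange (Localization.Away π)
            ((LinearMap.fst A F N).comp M'.subtype)) ∧
        Function.Bijective
          (LinearMap.liftBaseChange (AdicCompletion (Ideal.span {π}) A)
            ((LinearMap.snd A F N).comp M'.subtype))) := by
  have H := blData_completion A π
  refine ⟨fun M₀ _ _ _ => H.part1, ?_⟩
  intro F _ _ _ _ _ N _ _ _ _ _ ι
  let B := AdicCompletion (Ideal.span {π}) A
  let C := Localization.Away (algebraMap A B π)
  let h : N →ₗ[B] C ⊗[B] N := TensorProduct.mk B C N 1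
  let G0 : (B ⊗[A] F) →ₗ[B] C ⊗[B] (B ⊗[A] F) := TensorProduct.mk B C (B ⊗[A] F) 1
  let G : (B ⊗[A] F) →ₗ[B] C ⊗[B] N := (ι.restrictScalars B).toLinearMap ∘ₗ G0
  have hh : IsLocalizedModule (Submonoid.powers (algebraMap A B π)) h :=
    IsLocalization.tensorProduct_isLocalizedModule _ _
  have hG0 : IsLocalizedModule (Submonoid.powers (algebraMap A B π)) G0 :=
    IsLocalization.tensorProduct_isLocalizedModule _ _
  have hG : IsLocalizedModule (Submonoid.powers (algebraMap A B π)) G :=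
    IsLocalizedModule.of_linearEquiv _ _ _
  let M' : Submodule A (F × N) :=
    { carrier := {q : F × N | G (1 ⊗ₜ[A] q.1) = h q.2}
      zero_mem' := by
        change G (1 ⊗ₜ[A] 0) = h 0
        rw [tmul_zero, map_zero, map_zero]
      add_mem' := by
        rintro ⟨x, y⟩ ⟨x', y'⟩ h1 h2
        change G (1 ⊗ₜ[A] (x + x')) = h (y + y')
        rw [tmul_add, map_add, map_add]
        exact congrArg₂ (· + ·) h1 h2
      smul_mem' := by
        rintro a ⟨x, y⟩ h1
        change G (1 ⊗ₜ[A] (a • x)) = h (a • y)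
        rw [BLData.G_smul, ← algebraMap_smul B a y, map_smul]
        exact congrArg (algebraMap A B a • ·) h1 }
  have hM' : ∀ q : F × N, q ∈ M' ↔ G (1 ⊗ₜ[A] q.1) = h q.2 := fun q => Iff.rfl
  have hfin := H.fin h G M' hM'
  exact ⟨M', rfl, Module.finitePresentation_of_finite A M', BLData.bij1 (π := π) h G M' hM',
    H.bij2 h G M' hM'⟩
end

section
/- Let A be a Noetherian ring, π ∈ A a non-zerodivisor, Â the π-adic completion. A finitely generated A-module M is finitely presented projective (i.e., a vector bundle on Spec A) if and only if M[1/π] is a finite projective A[1/π]-module and M ⊗_A Â is a finite projective Â-module. -/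
open TensorProduct

/-- If `B` is flat over `A` and `B ⊗ M` is flat over `B`, then for every ideal `J`, the kernel of
`J ⊗ M → A ⊗ M` dies after base change to `B`. -/
lemma aux_subsingleton {A : Type*} [CommRing A] (B : Type*) [CommRing B] [Algebra A B]
    [Module.Flat A B] (M : Type*) [AddCommGroup M] [Module A M] [Module.Flat B (B ⊗[A] M)]
    (J : Ideal A) :
    Subsingleton (B ⊗[A] (LinearMap.ker (LinearMap.rTensor M J.subtype))) := by
  have hflat : Module.Flat A (B ⊗[A] M) := Module.Flat.trans A B (B ⊗[A] M)
  have h1 : Function.Injective (LinearMap.rTensor (B ⊗[A] M) J.subtype) :=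
    Module.Flat.rTensor_preserves_injective_linearMap _ J.injective_subtype
  have h2 : (TensorProduct.leftComm A B A M).toLinearMap ∘ₗ
      LinearMap.lTensor B (LinearMap.rTensor M J.subtype) =
      LinearMap.rTensor (B ⊗[A] M) J.subtype ∘ₗ
        (TensorProduct.leftComm A B J M).toLinearMap := by
    ext b j m
    simp
  have h3 : Function.Injective (LinearMap.lTensor B (LinearMap.rTensor M J.subtype)) := by
    have h4 : Function.Injective ((TensorProduct.leftComm A B A M).toLinearMap ∘ₗ
      LinearMap.lTensor B (LinearMap.rTensor M J.subtype)) := by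
      rw [h2]
      exact h1.comp (TensorProduct.leftComm A B J M).injective
    rw [LinearMap.coe_comp] at h4
    exact Function.Injective.of_comp h4
  have h5 : Function.Injective
      (LinearMap.lTensor B (LinearMap.ker (LinearMap.rTensor M J.subtype)).subtype) :=
    Module.Flat.lTensor_preserves_injective_linearMap _ (Submodule.injective_subtype _)
  have h6 : LinearMap.lTensor B (LinearMap.rTensor M J.subtype) ∘ₗ
      LinearMap.lTensor B (LinearMap.ker (LinearMap.rTensor M J.subtype)).subtype = 0 := by
    rw [← LinearMap.lTensor_comp, LinearMap.comp_ker_subtype, LinearMap.lTensor_zero]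
  refine ⟨fun x y => h5 (h3 ?_)⟩
  have hx := LinearMap.congr_fun h6 x
  have hy := LinearMap.congr_fun h6 y
  simp only [LinearMap.comp_apply, LinearMap.zero_apply] at hx hy
  rw [hx, hy]

lemma aux_zero {A : Type*} [CommRing A] [IsNoetherianRing A] (π : A)
    (K : Type*) [AddCommGroup K] [Module A K] [Module.Finite A K]
    (h1 : Subsingleton ((Localization.Away π) ⊗[A] K))
    (h2 : Subsingleton ((AdicCompletion (Ideal.span {π}) A) ⊗[A] K)) : Subsingleton K := by
  have h3 : Subsingleton (AdicCompletion (Ideal.span {π}) K) :=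
    (AdicCompletion.ofTensorProduct_surjective_of_finite (Ideal.span {π}) K).subsingleton
  have h4 : Subsingleton (LocalizedModule (Submonoid.powers π) K) :=
    ((IsLocalizedModule.isBaseChange (Submonoid.powers π) (Localization.Away π)
      (LocalizedModule.mkLinearMap (Submonoid.powers π) K)).equiv).symm.toEquiv.subsingleton
  obtain ⟨s, hs, hs0⟩ : ∃ s ∈ Submonoid.powers π, ∀ x : K, s • x = 0 := by
    obtain ⟨S, hS⟩ := Module.Finite.fg_top (R := A) (M := K)
    rw [LocalizedModule.subsingleton_iff] at h4
    choose r hr hr0 using h4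
    refine ⟨∏ x ∈ S, r x, Submonoid.prod_mem _ fun x _ => hr x, fun x => ?_⟩
    have hx : x ∈ Submodule.span A (S : Set K) := hS ▸ Submodule.mem_top
    induction hx using Submodule.span_induction with
    | mem x h =>
      obtain ⟨c, hc⟩ := Finset.dvd_prod_of_mem r h
      rw [hc, mul_comm, mul_smul, hr0, smul_zero]
    | zero => simp
    | add x y _ _ hx hy => rw [smul_add, hx, hy, add_zero]
    | smul a x _ hx => rw [smul_comm, hx, smul_zero]
  obtain ⟨n, rfl⟩ := hs
  have h5 : Subsingleton (K ⧸ ((Ideal.span {π}) ^ n • ⊤ : Submodule A K)) :=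
    (AdicCompletion.eval_surjective (Ideal.span {π}) K n).subsingleton
  rw [Submodule.Quotient.subsingleton_iff] at h5
  have h6 : ((Ideal.span {π}) ^ n • ⊤ : Submodule A K) = ⊥ := by
    rw [eq_bot_iff, Submodule.smul_le]
    intro r hr x _
    rw [Ideal.span_singleton_pow, Ideal.mem_span_singleton] at hr
    obtain ⟨c, rfl⟩ := hr
    rw [mul_comm, mul_smul, show π ^ n • x = 0 from hs0 x, smul_zero]
    exact Submodule.zero_mem _
  rw [h6] at h5
  exact (Submodule.subsingleton_iff A).mp (subsingleton_of_bot_eq_top h5)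

/-- Let `A` be Noetherian, `π ∈ A` a non-zerodivisor, `Â` the `π`-adic
completion. A finitely generated `A`-module `M` is finitely presented and projective (a
vector bundle on `Spec A`) iff `M[1/π]` is finite projective over `A[1/π]` and `M ⊗_A Â` is
finite projective over `Â`. -/
theorem statement12 (A : Type*) [CommRing A] [IsNoetherianRing A]
    (π : A) (hπ : π ∈ nonZeroDivisors A)
    (M : Type*) [AddCommGroup M] [Module A M] [Module.Finite A M] :
    (Module.FinitePresentation A M ∧ Module.Projective A M) ↔
      (Module.Finite (Localization.Away π) (LocalizedModule (Submonoid.powers π) M) ∧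
        Module.Projective (Localization.Away π) (LocalizedModule (Submonoid.powers π) M) ∧
        Module.Finite (AdicCompletion (Ideal.span {π}) A)
          ((AdicCompletion (Ideal.span {π}) A) ⊗[A] M) ∧
        Module.Projective (AdicCompletion (Ideal.span {π}) A)
          ((AdicCompletion (Ideal.span {π}) A) ⊗[A] M)) := by
  have e := (IsLocalizedModule.isBaseChange (Submonoid.powers π) (Localization.Away π)
      (LocalizedModule.mkLinearMap (Submonoid.powers π) M)).equiv
  constructor
  · rintro ⟨_, _⟩
    exact ⟨Module.Finite.equiv e, Module.Projective.of_equiv e, inferInstance, inferInstance⟩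
  · rintro ⟨_, _, _, _⟩
    have hfp : Module.FinitePresentation A M := Module.finitePresentation_of_finite A M
    have hP : Module.Projective (Localization.Away π) (Localization.Away π ⊗[A] M) :=
      Module.Projective.of_equiv e.symm
    have hFl : Module.Flat A (Localization.Away π) :=
      IsLocalization.flat _ (Submonoid.powers π)
    have hflat : Module.Flat A M := by
      rw [Module.Flat.iff_rTensor_injective']
      intro J
      rw [← LinearMap.ker_eq_bot, ← Submodule.subsingleton_iff_eq_bot]
      exact aux_zero π _ (aux_subsingleton _ M J) (aux_subsingleton _ M J)
    exact ⟨hfp, Module.Flat.projective_of_finitePresentation⟩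
end

section
/- Let A, B, C be commutative rings with ring maps α: A → C and β: B → C, and let D = A ×_C B. Suppose M_A is a finitely presented A-module, M_B a finitely presented B-module, and ι: M_A ⊗_A C ≅ M_B ⊗_B C an isomorphism of C-modules. Then M := M_A ×_{M_B ⊗_B C} M_B (fiber product over ι) is a D-module, and if β is surjective and A, B, C, D fit in a Milnor patching square (D = A ×_C B with β surjective), and M_A, M_B are finite projective, then M is a finite projective D-module with M ⊗_D A ≅ M_A and M ⊗_D B ≅ M_B. -/
open TensorProduct

section MilnorAux
open TensorProduct

/-- A finite dual basis of a finite projective module. -/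
theorem milnor_dual_basis (R M : Type*) [CommRing R] [AddCommGroup M] [Module R M]
    [Module.Finite R M] [Module.Projective R M] :
    ∃ (n : ℕ) (f : Fin n → (M →ₗ[R] R)) (x : Fin n → M), ∀ m, ∑ i, f i m • x i = m := by
  obtain ⟨n, f, g, -, -, h⟩ := Module.Finite.exists_comp_eq_id_of_projective R M
  refine ⟨n, fun i => (LinearMap.proj i).comp g, fun i => f (Pi.single i 1), fun m => ?_⟩
  have h1 : f (g m) = m := LinearMap.congr_fun h m
  conv_rhs => rw [← h1, LinearMap.pi_apply_eq_sum_univ f (g m)]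
  refine Finset.sum_congr rfl fun i _ => ?_
  have e : (Pi.single i 1 : Fin n → R) = fun j => if i = j then 1 else 0 := by
    ext j
    by_cases hj : j = i
    · subst hj; simp
    · simp [hj, Ne.symm hj]
  simp [e]

theorem milnor_finproj {D M ι : Type*} [Fintype ι] [CommRing D] [AddCommGroup M] [Module D M]
    (φ : ι → (M →ₗ[D] D)) (x : ι → M) (h : ∀ m, ∑ i, φ i m • x i = m) :
    Module.Finite D M ∧ Module.Projective D M := by
  have hc : (Fintype.linearCombination D x).comp (LinearMap.pi φ) = LinearMap.id := by
    ext m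
    simpa [Fintype.linearCombination_apply] using h m
  refine ⟨Module.Finite.of_surjective (Fintype.linearCombination D x) fun m =>
    ⟨LinearMap.pi φ m, LinearMap.congr_fun hc m⟩, Module.Projective.of_split _ _ hc⟩

theorem milnor_baseChange {D A M N ι : Type*} [Fintype ι] [CommRing D] [CommRing A] [Algebra D A]
    [AddCommGroup M] [Module D M] [AddCommGroup N] [Module A N] [Module D N] [IsScalarTower D A N]
    (π : M →ₗ[D] N) (φ : ι → (M →ₗ[D] D)) (x : ι → M) (h : ∀ m, ∑ i, φ i m • x i = m)
    (f : ι → (N →ₗ[A] A)) (hf : ∀ i m, f i (π m) = algebraMap D A (φ i m))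
    (hN : ∀ y, ∑ i, f i y • π (x i) = y) : Nonempty ((A ⊗[D] M) ≃ₗ[A] N) := by
  refine ⟨LinearEquiv.ofLinearMap (π.liftBaseChange A)
    (∑ i, (LinearMap.toSpanSingleton A (A ⊗[D] M) (1 ⊗ₜ x i)).comp (f i)) ?_ ?_⟩
  · ext y
    simpa [map_sum] using hN y
  · apply LinearMap.ext
    intro z
    induction z with
    | zero => simp
    | add a b ha hb => rw [map_add, ha, hb, map_add]
    | tmul a m =>
      simp only [LinearMap.comp_apply, LinearMap.liftBaseChange_tmul, LinearMap.sum_apply,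
        LinearMap.toSpanSingleton_apply, map_smul, hf, LinearMap.id_apply]
      conv_rhs => rw [← h m, TensorProduct.tmul_sum]
      rw [Finset.smul_sum]
      refine Finset.sum_congr rfl fun i _ => ?_
      simp only [smul_eq_mul, TensorProduct.smul_tmul', one_mul, mul_one, TensorProduct.tmul_smul,
        Algebra.smul_def, mul_comm]

theorem milnor_main (A B C D : Type*) [CommRing A] [CommRing B] [CommRing C] [CommRing D]
    [Algebra A C] [Algebra B C] [Algebra D A] [Algebra D B]
    (hcomm : ∀ d : D, algebraMap A C (algebraMap D A d) = algebraMap B C (algebraMap D B d))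
    (hinj : ∀ d e : D, algebraMap D A d = algebraMap D A e →
      algebraMap D B d = algebraMap D B e → d = e)
    (hrange : ∀ a b, algebraMap A C a = algebraMap B C b →
      ∃ d : D, algebraMap D A d = a ∧ algebraMap D B d = b)
    (hβ : Function.Surjective (algebraMap B C))
    (M_A : Type*) [AddCommGroup M_A] [Module A M_A]
      [Module.Projective A M_A] [Module.Finite A M_A]
    (M_B : Type*) [AddCommGroup M_B] [Module B M_B]
      [Module.Projective B M_B] [Module.Finite B M_B]
    [Module D M_A] [Module D M_B] [IsScalarTower D A M_A] [IsScalarTower D B M_B]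
    (ι : (C ⊗[A] M_A) ≃ₗ[C] (C ⊗[B] M_B)) :
    ∃ M' : Submodule D (M_A × M_B),
        (↑M' : Set (M_A × M_B))
            = {q : M_A × M_B | ι ((1 : C) ⊗ₜ[A] q.1) = (1 : C) ⊗ₜ[B] q.2} ∧
        Module.Finite D M' ∧ Module.Projective D M' ∧
        Nonempty ((A ⊗[D] M') ≃ₗ[A] M_A) ∧ Nonempty ((B ⊗[D] M') ≃ₗ[B] M_B) := by
  have tA : ∀ (a : A) (x : M_A), (1 : C) ⊗ₜ[A] (a • x) = algebraMap A C a • ((1 : C) ⊗ₜ[A] x) := by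
    intro a x; rw [algebraMap_smul, TensorProduct.tmul_smul]
  have tB : ∀ (a : B) (x : M_B), (1 : C) ⊗ₜ[B] (a • x) = algebraMap B C a • ((1 : C) ⊗ₜ[B] x) := by
    intro a x; rw [algebraMap_smul, TensorProduct.tmul_smul]
  let M' : Submodule D (M_A × M_B) :=
    { carrier := {q : M_A × M_B | ι ((1 : C) ⊗ₜ[A] q.1) = (1 : C) ⊗ₜ[B] q.2}
      zero_mem' := by simp
      add_mem' := by
        intro p q hp hq
        simp only [Set.mem_ofPred_eq, Prod.fst_add, Prod.snd_add, TensorProduct.tmul_add,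
          map_add] at hp hq ⊢
        rw [hp, hq]
      smul_mem' := by
        intro d p hp
        simp only [Set.mem_ofPred_eq, Prod.smul_fst, Prod.smul_snd] at hp ⊢
        rw [← algebraMap_smul A d p.1, ← algebraMap_smul B d p.2, tA, tB, map_smul, hp, hcomm] }
  have memM : ∀ q, q ∈ M' ↔ ι ((1 : C) ⊗ₜ[A] q.1) = (1 : C) ⊗ₜ[B] q.2 := fun q => Iff.rfl
  refine ⟨M', rfl, ?_⟩
  -- functionals on the fiber product
  have key : ∀ (f : M_A →ₗ[A] A) (g : M_B →ₗ[B] B),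
      (∀ m : M', algebraMap A C (f m.1.1) = algebraMap B C (g m.1.2)) →
      ∃ φ : M' →ₗ[D] D, ∀ m : M', algebraMap D A (φ m) = f m.1.1 ∧
        algebraMap D B (φ m) = g m.1.2 := by
    intro f g hfg
    choose φ h1 h2 using fun m : M' => hrange _ _ (hfg m)
    refine ⟨⟨⟨φ, ?_⟩, ?_⟩, fun m => ⟨h1 m, h2 m⟩⟩
    · intro x y
      apply hinj
      · rw [map_add, h1, h1, h1]; simp
      · rw [map_add, h2, h2, h2]; simp
    · intro d x
      apply hinj
      · simp only [smul_eq_mul, map_mul, h1, RingHom.id_apply]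
        rw [← smul_eq_mul, ← map_smul, algebraMap_smul]; rfl
      · simp only [smul_eq_mul, map_mul, h2, RingHom.id_apply]
        rw [← smul_eq_mul, ← map_smul, algebraMap_smul]; rfl
  have surjB : ∀ z : C ⊗[B] M_B, ∃ y : M_B, (1 : C) ⊗ₜ[B] y = z := by
    intro z
    induction z with
    | zero => exact ⟨0, by simp⟩
    | add a b ha hb =>
      obtain ⟨y, rfl⟩ := ha
      obtain ⟨y', rfl⟩ := hb
      exact ⟨y + y', TensorProduct.tmul_add _ _ _⟩
    | tmul c y =>
      obtain ⟨b, rfl⟩ := hβ c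
      refine ⟨b • y, ?_⟩
      rw [tB, TensorProduct.smul_tmul', smul_eq_mul, mul_one]
  have vanish : ∀ (g : M_B →ₗ[B] B) (y : M_B), (1 : C) ⊗ₜ[B] y = 0 → algebraMap B C (g y) = 0 := by
    intro g y hy
    have := congrArg (((Algebra.linearMap B C).comp g).liftBaseChange C) hy
    simpa using this
  obtain ⟨n, f, x, hx⟩ := milnor_dual_basis A M_A
  obtain ⟨p, k, w, hw⟩ := milnor_dual_basis B M_B
  let fC : Fin n → (C ⊗[A] M_A →ₗ[C] C) := fun i =>
    ((Algebra.linearMap A C).comp (f i)).liftBaseChange C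
  have hfC : ∀ i x, fC i (1 ⊗ₜ x) = algebraMap A C (f i x) := by
    intro i x; simp [fC]
  have hfCx : ∀ z, ∑ i, fC i z • ((1 : C) ⊗ₜ[A] x i) = z := by
    intro z
    induction z with
    | zero => simp
    | add a b ha hb => simp only [map_add, add_smul, Finset.sum_add_distrib, ha, hb]
    | tmul c m =>
      have : c ⊗ₜ[A] m = c • ((1 : C) ⊗ₜ[A] m) := by
        rw [TensorProduct.smul_tmul', smul_eq_mul, mul_one]
      rw [this]
      simp only [map_smul, hfC, smul_assoc, ← tA]
      rw [← Finset.smul_sum, ← TensorProduct.tmul_sum, hx]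
  choose y hy using fun i => surjB (ι (1 ⊗ₜ x i))
  have hg : ∀ i, ∃ g : M_B →ₗ[B] B, ∀ v, algebraMap B C (g v) = fC i (ι.symm (1 ⊗ₜ v)) := by
    intro i
    obtain ⟨g, hg⟩ := Module.projective_lifting_property (Algebra.linearMap B C)
      ((((fC i).comp ι.symm.toLinearMap).restrictScalars B).comp (TensorProduct.mk B C M_B 1)) hβ
    exact ⟨g, fun v => LinearMap.congr_fun hg v⟩
  choose g hg using hg
  let h : M_B →ₗ[B] M_B := LinearMap.id - ∑ i, (LinearMap.toSpanSingleton B M_B (y i)).comp (g i)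
  have h_apply : ∀ v, h v = v - ∑ i, g i v • y i := by intro v; simp [h]
  have h_zero : ∀ v, (1 : C) ⊗ₜ[B] (h v) = 0 := by
    intro v
    rw [h_apply, TensorProduct.tmul_sub, TensorProduct.tmul_sum, sub_eq_zero]
    simp only [tB, hg, hy, ← map_smul]
    rw [← map_sum, hfCx, LinearEquiv.apply_symm_apply]
  let F : Fin n ⊕ Fin p → (M_A →ₗ[A] A) := Sum.elim f (fun _ => 0)
  let G : Fin n ⊕ Fin p → (M_B →ₗ[B] B) := Sum.elim g (fun j => (k j).comp h)
  let X : Fin n ⊕ Fin p → M' := Sum.elim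
    (fun i => ⟨(x i, y i + h (y i)), by
      rw [memM, TensorProduct.tmul_add, h_zero, add_zero, hy]⟩)
    (fun j => ⟨(0, h (w j)), by rw [memM, h_zero]; simp⟩)
  have hFG : ∀ s (m : M'), algebraMap A C (F s m.1.1) = algebraMap B C (G s m.1.2) := by
    rintro (i | j) ⟨m, hm⟩
    · rw [memM] at hm
      simp only [F, G, Sum.elim_inl]
      rw [hg, ← hm, LinearEquiv.symm_apply_apply, hfC]
    · simp only [F, G, Sum.elim_inr, LinearMap.zero_apply, map_zero, LinearMap.comp_apply]
      exact (vanish _ _ (h_zero _)).symm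
  choose φ hφA hφB using fun s => (fun t : _ => (key (F s) (G s) t)) (hFG s) |>.imp
    fun φ h => (⟨fun m => (h m).1, fun m => (h m).2⟩ : (∀ m : M', _) ∧ (∀ m : M', _))
  have sumA : ∀ v, ∑ s, F s v • (X s).1.1 = v := by
    intro v
    simp [F, X, Fintype.sum_sum_type, hx]
  have sumB : ∀ v, ∑ s, G s v • (X s).1.2 = v := by
    intro v
    have e1 : ∑ j, k j (h v) • h (w j) = h (h v) := by
      conv_rhs => rw [← hw (h v), map_sum]
      simp only [map_smul]
    have e2 : ∑ i, g i v • y i = v - h v := by rw [h_apply]; abel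
    have e3 : ∑ i, g i v • h (y i) = h v - h (h v) := by
      rw [← map_sub, ← e2, map_sum]; simp only [map_smul]
    simp only [F, G, X, Fintype.sum_sum_type, Sum.elim_inl, Sum.elim_inr, LinearMap.comp_apply,
      smul_add, Finset.sum_add_distrib, e1, e2, e3]
    abel
  have sumM : ∀ m, ∑ s, φ s m • X s = m := by
    intro m
    apply Subtype.ext
    apply Prod.ext
    · rw [← sumA m.1.1]
      simp only [Submodule.coe_sum, Prod.fst_sum, Submodule.coe_smul, Prod.smul_fst, ← hφA,
        algebraMap_smul]
    · rw [← sumB m.1.2]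
      simp only [Submodule.coe_sum, Prod.snd_sum, Submodule.coe_smul, Prod.smul_snd, ← hφB,
        algebraMap_smul]
  obtain ⟨r1, r2⟩ := milnor_finproj φ X sumM
  exact ⟨r1, r2,
    milnor_baseChange ((LinearMap.fst D M_A M_B).comp M'.subtype) φ X sumM F
      (fun s m => (hφA s m).symm) sumA,
    milnor_baseChange ((LinearMap.snd D M_A M_B).comp M'.subtype) φ X sumM G
      (fun s m => (hφB s m).symm) sumB⟩

end MilnorAux

/-- (Milnor patching.) Let `D = A ×_C B` be a Milnor square of commutative
rings (projections `pA, pB`, maps `α : A → C`, `β : B → C` with `β` surjective, the pairing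
`d ↦ (pA d, pB d)` injective with image the matching pairs). Let `M_A`, `M_B` be finite
projective (finitely presented) modules over `A`, `B` and `ι : M_A ⊗_A C ≅ M_B ⊗_B C` an
isomorphism of `C`-modules. Then the fiber product
`M = {(x, y) : M_A × M_B | ι(1 ⊗ x) = 1 ⊗ y}` is a `D`-submodule of `M_A × M_B`, it is a
finite projective `D`-module, and `M ⊗_D A ≅ M_A`, `M ⊗_D B ≅ M_B`. -/
theorem statement15 (A B C D : Type*) [CommRing A] [CommRing B] [CommRing C] [CommRing D]
    (α : A →+* C) (β : B →+* C) (pA : D →+* A) (pB : D →+* B)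
    (hcomm : α.comp pA = β.comp pB)
    (hinj : Function.Injective (fun d : D => (pA d, pB d)))
    (hrange : Set.range (fun d : D => (pA d, pB d)) = {p : A × B | α p.1 = β p.2})
    (hβ : Function.Surjective β)
    (M_A : Type*) [AddCommGroup M_A] [Module A M_A]
      [Module.FinitePresentation A M_A] [Module.Projective A M_A] [Module.Finite A M_A]
    (M_B : Type*) [AddCommGroup M_B] [Module B M_B]
      [Module.FinitePresentation B M_B] [Module.Projective B M_B] [Module.Finite B M_B] :
    letI : Algebra A C := α.toAlgebra
    letI : Algebra B C := β.toAlgebra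
    letI : Algebra D A := pA.toAlgebra
    letI : Algebra D B := pB.toAlgebra
    letI : Module D M_A := Module.compHom M_A pA
    letI : Module D M_B := Module.compHom M_B pB
    ∀ ι : (C ⊗[A] M_A) ≃ₗ[C] (C ⊗[B] M_B),
      ∃ M' : Submodule D (M_A × M_B),
        (↑M' : Set (M_A × M_B))
            = {q : M_A × M_B | ι ((1 : C) ⊗ₜ[A] q.1) = (1 : C) ⊗ₜ[B] q.2} ∧
        Module.Finite D M' ∧ Module.Projective D M' ∧
        Nonempty ((A ⊗[D] M') ≃ₗ[A] M_A) ∧ Nonempty ((B ⊗[D] M') ≃ₗ[B] M_B) := by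
  intro ι
  letI : Algebra A C := α.toAlgebra
  letI : Algebra B C := β.toAlgebra
  letI : Algebra D A := pA.toAlgebra
  letI : Algebra D B := pB.toAlgebra
  letI : Module D M_A := Module.compHom M_A pA
  letI : Module D M_B := Module.compHom M_B pB
  haveI : IsScalarTower D A M_A := ⟨fun d a x => mul_smul (pA d) a x⟩
  haveI : IsScalarTower D B M_B := ⟨fun d a x => mul_smul (pB d) a x⟩
  refine milnor_main A B C D (fun d => RingHom.congr_fun hcomm d)
    (fun d e h1 h2 => hinj (Prod.ext h1 h2)) (fun a b hab => ?_) hβ M_A M_B ι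
  have hm : (a, b) ∈ Set.range (fun d : D => (pA d, pB d)) := by
    rw [hrange]; exact hab
  obtain ⟨d, hd⟩ := hm
  exact ⟨d, congrArg Prod.fst hd, congrArg Prod.snd hd⟩
end
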